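/- Let G be a finitely generated computable amenable group and S a finite symmetric generating set of G. Let (F_i) be a Følner sequence in G such that every F_i contains the identity 1_G and every F_i is connected in the Cayley graph of (G, S) (i.e. for all g, h ∈ F_i there exist s_1, …, s_m ∈ S with s_m⋯s_1 g = h and with every partial product s_j⋯s_1 g lying in F_i). Then (F_i) is modest, i.e. C(F_i)/|F_i| → 0. -/

import Mathlib

open Filter MeasureTheory
open scoped Pointwise Classical

namespace Brudno

noncomputable section

/-- Complexity of a binary string `x` relative to a partial function `f` :
the minimal length of a `y` with `f y = x`. -/
def CF (f : List Bool →. List Bool) (x : List Bool) : ℕ :=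
  sInf { n | ∃ y : List Bool, y.length = n ∧ x ∈ f y }

/-- `u` is an optimal partial computable machine: it is partial computable, and for
every partial computable `f` there is a constant `K` with `C_u x ≤ C_f x + K` for all `x`. -/
def Optimal (u : List Bool →. List Bool) : Prop :=
  Partrec u ∧ ∀ f : List Bool →. List Bool, Partrec f →
    ∃ K : ℕ, ∀ x y : List Bool, x ∈ f y → CF u x ≤ y.length + K

/-- Kolmogorov complexity of a natural number (relative to the machine `u`),
via the binary representation. -/
def KC (u : List Bool →. List Bool) (n : ℕ) : ℕ := CF u (Nat.bits n)

/-- A fixed computable injective encoding of finite subsets of `ℕ` into `ℕ`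
(hence into binary strings). -/
def encFinsetNat (F : Finset ℕ) : ℕ := Encodable.encode (F.sort (· ≤ ·))

variable {G A B : Type}

/-- Encoding of a finite subset of `G`, where `G` has underlying set `ℕ` via `e`. -/
def encFinset (e : G ≃ ℕ) (F : Finset G) : ℕ := encFinsetNat (F.image e)

/-- The group multiplication is computable on the underlying set `ℕ`. -/
def ComputableMul [Group G] (e : G ≃ ℕ) : Prop :=
  Computable₂ fun m n : ℕ => e (e.symm m * e.symm n)

/-- A Følner sequence: a sequence of (nonempty) finite subsets with
`|gFᵢ \ Fᵢ| / |Fᵢ| → 0` for every `g ∈ G`. -/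
def IsFolner [Group G] (F : ℕ → Finset G) : Prop :=
  (∀ i, (F i).Nonempty) ∧
    ∀ g : G,
      Tendsto (fun i => (((F i).image (fun h => g * h) \ F i).card : ℝ) / ((F i).card : ℝ))
        atTop (nhds 0)

/-- A tempered sequence: `|⋃_{j<i} Fⱼ⁻¹ Fᵢ| ≤ K |Fᵢ|` for all `i`. -/
def Tempered [Group G] (F : ℕ → Finset G) : Prop :=
  ∃ K : ℝ, 0 < K ∧
    ∀ i : ℕ, ((((Finset.range i).biUnion fun j => (F j)⁻¹ * F i)).card : ℝ) ≤ K * ((F i).card : ℝ)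

/-- A modest sequence: `C(Fᵢ)/|Fᵢ| → 0`. -/
def Modest (u : List Bool →. List Bool) (e : G ≃ ℕ) (F : ℕ → Finset G) : Prop :=
  Tendsto (fun i => (KC u (encFinset e (F i)) : ℝ) / ((F i).card : ℝ)) atTop (nhds 0)

/-- The shift action of `G` on `A^G`: `(g • x) h = x (h * g)`. -/
def shift [Group G] (g : G) (x : G → A) : G → A := fun h => x (h * g)

/-- A fixed computable injective encoding of the restriction of `x : G → A` to a finite
subset `F ⊆ G` (a partial map with finite domain), listing the domain in increasing
order of the ℕ-codes. -/
def encRestrict [Encodable A] (e : G ≃ ℕ) (F : Finset G) (x : G → A) : ℕ :=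
  Encodable.encode
    (((F.image e).sort (· ≤ ·)).map fun n => (n, Encodable.encode (x (e.symm n))))

/-- Upper asymptotic complexity of `x ∈ A^G` relative to the sequence `F`. -/
def uac [Encodable A] (u : List Bool →. List Bool) (e : G ≃ ℕ) (F : ℕ → Finset G)
    (x : G → A) : ℝ :=
  limsup (fun i => (KC u (encRestrict e (F i) x) : ℝ) / ((F i).card : ℝ)) atTop

/-- Lower asymptotic complexity of `x ∈ A^G` relative to the sequence `F`. -/
def lac [Encodable A] (u : List Bool →. List Bool) (e : G ≃ ℕ) (F : ℕ → Finset G)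
    (x : G → A) : ℝ :=
  liminf (fun i => (KC u (encRestrict e (F i) x) : ℝ) / ((F i).card : ℝ)) atTop

/-- The product topology on `A^G`, `A` being discrete. -/
def prodiscrete (G A : Type) : TopologicalSpace (G → A) :=
  @Pi.topologicalSpace G (fun _ => A) fun _ => ⊥

/-- The Borel σ-algebra of the prodiscrete topology on `A^G`. -/
def prodisBorel (G A : Type) : MeasurableSpace (G → A) := @borel (G → A) (prodiscrete G A)

/-- A subshift: a closed shift-invariant subset of `A^G`. -/
def IsSubshift [Group G] (X : Set (G → A)) : Prop :=
  @IsClosed (G → A) (prodiscrete G A) X ∧ ∀ g : G, ∀ x ∈ X, shift g x ∈ X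

/-- The number of distinct restrictions to `F` of elements of `X`, i.e. `|pr_F(X)|`. -/
def projCount (F : Finset G) (X : Set (G → A)) : ℕ :=
  Nat.card ↥((fun (x : G → A) (g : ↥F) => x ↑g) '' X)

/-- Shannon entropy (base 2) of the join partition `α^F` (whose atoms are the
cylinders over the finite set `F`), for the measure `μ`. -/
def Hjoin [Fintype A] (μ : @Measure (G → A) (prodisBorel G A)) (F : Finset G) : ℝ :=
  -∑ w : ↥F → A,
      (μ {x : G → A | ∀ g : ↥F, x ↑g = w g}).toReal *
        Real.logb 2 (μ {x : G → A | ∀ g : ↥F, x ↑g = w g}).toReal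

/-- Shannon entropy (base 2) of the canonical alphabet partition. -/
def Halpha [Group G] [Fintype A] (μ : @Measure (G → A) (prodisBorel G A)) : ℝ :=
  -∑ a : A, (μ {x : G → A | x 1 = a}).toReal * Real.logb 2 (μ {x : G → A | x 1 = a}).toReal

/-- `cont` of the restriction of `x` to `F`: the word of values of `x` on `F`,
listed in increasing order of the ℕ-codes of the elements of `F`. -/
def contWord (e : G ≃ ℕ) (F : Finset G) (x : G → A) : List A :=
  ((F.image e).sort (· ≤ ·)).map fun n => x (e.symm n)

/-- A fixed computable injective encoding of words over `A`. -/
def encWord [Encodable A] (w : List A) : ℕ := Encodable.encode w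

/-- Frequency of the letter `a` in the word `w`. -/
def freq (w : List A) (a : A) : ℝ :=
  ((w.filter fun b => decide (b = a)).length : ℝ) / (w.length : ℝ)

/-- Shannon entropy (base 2) of the letter-frequency vector of the word `w`. -/
def wordEntropy [Fintype A] (w : List A) : ℝ :=
  -∑ a : A, freq w a * Real.logb 2 (freq w a)

/-- The binary entropy function `H(p, 1-p)`. -/
def Hbin (p : ℝ) : ℝ := -(p * Real.logb 2 p) - (1 - p) * Real.logb 2 (1 - p)

/-- Normalized Hamming distance between two words (of the same length). -/
def hammingDist (w w' : List A) : ℝ :=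
  (((w.zip w').filter fun p => decide (p.1 ≠ p.2)).length : ℝ) / (w.length : ℝ)

end

/-! ### Helper material: sparse coding -/

/-- One step of the sparse decoder. -/
def dstep (m : ℕ) (s : Bool × List Bool) (b : Bool) : Bool × List Bool :=
  bif s.1 then (false, s.2 ++ [b])
  else bif b then (false, s.2 ++ List.replicate m true) else (true, s.2)

/-- The sparse decoder. -/
def sdec (m : ℕ) (y : List Bool) : List Bool := (y.foldl (dstep m) (false, [])).2

theorem dstep_primrec (m : ℕ) : Primrec fun p : (Bool × List Bool) × Bool => dstep m p.1 p.2 := by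
  unfold dstep
  refine Primrec.cond (Primrec.fst.comp Primrec.fst) ?_ (Primrec.cond Primrec.snd ?_ ?_)
  · exact Primrec.pair (Primrec.const _)
      (Primrec.list_concat.comp (Primrec.snd.comp Primrec.fst) Primrec.snd)
  · exact Primrec.pair (Primrec.const _)
      (Primrec.list_append.comp (Primrec.snd.comp Primrec.fst) (Primrec.const _))
  · exact Primrec.pair (Primrec.const _) (Primrec.snd.comp Primrec.fst)

theorem sdec_primrec (m : ℕ) : Primrec (sdec m) := by
  refine Primrec.snd.comp (Primrec.list_foldl (h := fun _ p => dstep m p.1 p.2)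
    Primrec.id (Primrec.const _) ?_)
  exact (dstep_primrec m).comp Primrec.snd

theorem dstep_lit (m : ℕ) (l out : List Bool) :
    (l.flatMap fun b => [false, b]).foldl (dstep m) (false, out) = (false, out ++ l) := by
  induction l generalizing out with
  | nil => simp
  | cons b l ih => simp [dstep, ih]

theorem lit_length (l : List Bool) : (l.flatMap fun b => [false, b]).length = 2 * l.length := by
  induction l with
  | nil => simp
  | cons b l ih => simp only [List.flatMap_cons, List.length_append, ih, List.length_cons]; simp; ring

theorem sparse_aux (m : ℕ) (hm : 0 < m) : ∀ (L : ℕ) (w : List Bool), w.length = L →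
    ∃ (y : List Bool) (j : ℕ),
      (∀ out, y.foldl (dstep m) (false, out) = (false, out ++ (w ++ List.replicate j true))) ∧
      m * y.length ≤ w.length + 2 * m * m * w.count false + m := by
  intro L
  induction L using Nat.strong_induction_on with
  | _ L ih =>
  intro w hw
  by_cases hf : false ∈ w.take m
  · obtain ⟨s, t, hst⟩ := List.append_of_mem hf
    have hlen : s.length + 1 ≤ m := by
      have := congrArg List.length hst
      simp at this; omega
    have hw' : w = (s ++ [false]) ++ (t ++ w.drop m) := by
      conv_lhs => rw [← List.take_append_drop m w, hst]
      simp
    set w' := t ++ w.drop m with hw'd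
    clear_value w'
    subst hw'
    obtain ⟨y, j, hy, hl⟩ := ih w'.length (by rw [← hw]; simp; omega) w' rfl
    refine ⟨((s ++ [false]).flatMap fun b => [false, b]) ++ y, j, ?_, ?_⟩
    · intro out
      rw [List.foldl_append, dstep_lit, hy]; simp
    · rw [List.length_append, lit_length]
      simp only [List.length_append, List.count_append, List.length_singleton,
        List.count_singleton_self]
      have : m * (2 * (s.length + 1)) ≤ m * (2 * m) := by gcongr
      nlinarith [Nat.zero_le (m * m * s.count false)]
  · have hall : w.take m = List.replicate (w.take m).length true := by
      rw [List.eq_replicate_iff]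
      refine ⟨rfl, fun b hb => ?_⟩
      cases b
      · exact absurd hb hf
      · rfl
    by_cases hlen : m ≤ w.length
    · have h1 : (w.take m).length = m := by simp [hlen]
      rw [h1] at hall
      have hw' : w = List.replicate m true ++ w.drop m := by
        rw [← hall, List.take_append_drop]
      set w' := w.drop m with hw'd
      clear_value w'
      subst hw'
      obtain ⟨y, j, hy, hl⟩ := ih w'.length (by rw [← hw]; simp; exact hm) w' rfl
      refine ⟨true :: y, j, ?_, ?_⟩
      · intro out
        rw [List.foldl_cons]
        simp only [dstep, cond_true, cond_false]
        rw [hy]; simp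
      · simp only [List.length_cons, List.length_append, List.length_replicate, List.count_append]
        nlinarith [Nat.zero_le (m * m * (List.replicate m true).count false)]
    · push Not at hlen
      rw [List.take_of_length_le hlen.le] at hall
      refine ⟨[true], m - w.length, ?_, ?_⟩
      · intro out
        rw [hall]
        simp [dstep]
        omega
      · simp

theorem sparse (m : ℕ) (hm : 0 < m) (w : List Bool) :
    ∃ (y : List Bool) (w' : List Bool), sdec m y = w ++ w' ∧
      m * y.length ≤ w.length + 2 * m * m * w.count false + m := by
  obtain ⟨y, j, hy, hl⟩ := sparse_aux m hm _ w rfl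
  exact ⟨y, List.replicate j true, by rw [sdec, hy]; simp, hl⟩

/-! ### Computability of binary expansion and sorting -/

/-- One step of the computation of the binary expansion. -/
def bstep (p : ℕ × List Bool) : ℕ × List Bool :=
  if p.1 = 0 then p else (p.1 / 2, p.2 ++ [Nat.bodd p.1])

theorem bstep_primrec : Primrec bstep := by
  unfold bstep
  refine Primrec.ite (Primrec.eq.comp Primrec.fst (Primrec.const 0)) Primrec.id ?_
  exact Primrec.pair (Primrec.nat_div.comp Primrec.fst (Primrec.const 2))
    (Primrec.list_concat.comp Primrec.snd (Primrec.nat_bodd.comp Primrec.fst))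

theorem bstep_iter (k : ℕ) : ∀ (n : ℕ) (l : List Bool), n ≤ k →
    bstep^[k] (n, l) = (0, l ++ Nat.bits n) := by
  induction k with
  | zero => intro n l h; obtain rfl : n = 0 := by omega
            simp
  | succ k ih =>
    intro n l h
    rw [Function.iterate_succ_apply]
    by_cases hn : n = 0
    · subst hn
      have : bstep (0, l) = (0, l) := by simp [bstep]
      rw [this, ih 0 l (by omega)]
    · have : bstep (n, l) = (n / 2, l ++ [Nat.bodd n]) := by simp [bstep, hn]
      rw [this, ih _ _ (by omega)]
      have hb : Nat.bits n = Nat.bodd n :: Nat.bits (n / 2) := by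
        conv_lhs => rw [← Nat.bit_bodd_div2 n]
        rw [Nat.bits_append_bit]
        · rw [Nat.div2_val]
        · intro h0
          have := Nat.bit_bodd_div2 n
          rw [h0] at this
          cases hb : n.bodd
          · rw [hb] at this; simp at this; omega
          · rfl
      rw [hb]; simp

theorem bits_primrec : Primrec Nat.bits := by
  refine (Primrec.snd.comp (Primrec.nat_iterate (f := fun n : ℕ => n)
    (g := fun n : ℕ => (n, ([] : List Bool))) (h := fun _ p => bstep p) Primrec.id
    (Primrec.pair Primrec.id (Primrec.const _)) (bstep_primrec.comp Primrec.snd))).of_eq ?_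
  intro n
  rw [bstep_iter n n [] le_rfl]; simp

theorem mem_primrec : PrimrecRel fun (x : ℕ) (l : List ℕ) => x ∈ l := by
  have h := (PrimrecRel.exists_mem_list (R := fun a b : ℕ => a = b) Primrec.eq)
  exact (h.comp Primrec.snd Primrec.fst).of_eq (fun p => by simp)

/-- Sorting a list (removing duplicates) in an evidently primitive recursive way. -/
def psort (l : List ℕ) : List ℕ :=
  (List.range (l.foldr (fun a b => a + b) 0 + 1)).filter fun x => x ∈ l

theorem psort_primrec : Primrec psort := by
  unfold psort
  refine (PrimrecRel.listFilter mem_primrec).comp ?_ Primrec.id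
  refine Primrec.list_range.comp (Primrec.succ.comp ?_)
  exact Primrec.list_foldr (h := fun _ p => p.1 + p.2) Primrec.id (Primrec.const 0)
    (Primrec.nat_add.comp (Primrec.fst.comp Primrec.snd) (Primrec.snd.comp Primrec.snd))

theorem psort_eq (l : List ℕ) : psort l = l.toFinset.sort (· ≤ ·) := by
  have h1 : (psort l).Nodup := List.Nodup.filter _ List.nodup_range
  refine List.Perm.eq_of_pairwise (le := (· ≤ ·)) (fun a b _ _ h h' => le_antisymm h h') ?_
    (Finset.pairwise_sort _ _) ?_
  · exact List.Pairwise.filter _ (List.pairwise_le_range)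
  · rw [List.perm_ext_iff_of_nodup h1 (Finset.sort_nodup _ _)]
    intro a
    simp only [psort, List.mem_filter, List.mem_range, Finset.mem_sort, List.mem_toFinset,
      decide_eq_true_eq, and_iff_right_iff_imp]
    intro ha
    have : a ≤ l.sum := List.le_sum_of_mem ha
    exact Nat.lt_succ_of_le this

/-! ### Exploration of a connected set -/

/-- State of the exploration: accepted vertices, seen vertices, pending vertices. -/
abbrev EState := List ℕ × List ℕ × List ℕ

/-- One step of the exploration. -/
def estep (nb : ℕ → List ℕ) (s : EState) (b : Bool) : EState :=
  Option.casesOn (s.2.2.filter fun x => x ∉ s.2.1).head? s fun v =>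
    bif b then (v :: s.1, v :: s.2.1, nb v ++ s.2.2) else (s.1, v :: s.2.1, s.2.2)

theorem filter_primrec : Primrec₂ fun (l : List ℕ) (t : List ℕ) => l.filter fun x => x ∉ t := by
  have h : PrimrecRel fun (x : ℕ) (t : List ℕ) => x ∉ t := PrimrecPred.not mem_primrec
  exact PrimrecRel.listFilter h

theorem estep_computable (nb : ℕ → List ℕ) (hnb : Computable nb) :
    Computable fun p : EState × Bool => estep nb p.1 p.2 := by
  unfold estep
  have hA : Primrec fun p : (EState × Bool) × ℕ => p.1.1.1 :=
    Primrec.fst.comp (Primrec.fst.comp Primrec.fst)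
  have hT : Primrec fun p : (EState × Bool) × ℕ => p.1.1.2.1 :=
    Primrec.fst.comp (Primrec.snd.comp (Primrec.fst.comp Primrec.fst))
  have hQ : Primrec fun p : (EState × Bool) × ℕ => p.1.1.2.2 :=
    Primrec.snd.comp (Primrec.snd.comp (Primrec.fst.comp Primrec.fst))
  refine Computable.option_casesOn ?_ Computable.fst ?_
  · refine Primrec.to_comp ?_
    refine Primrec.list_head?.comp (filter_primrec.comp ?_ ?_)
    · exact Primrec.snd.comp (Primrec.snd.comp Primrec.fst)
    · exact Primrec.fst.comp (Primrec.snd.comp Primrec.fst)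
  · refine Computable.cond (Computable.snd.comp Computable.fst) ?_ ?_
    · refine Computable.pair ?_ (Computable.pair ?_ ?_)
      · exact Computable.list_cons.comp Computable.snd hA.to_comp
      · exact Computable.list_cons.comp Computable.snd hT.to_comp
      · exact Computable.list_append.comp (hnb.comp Computable.snd) hQ.to_comp
    · refine Computable.pair hA.to_comp (Computable.pair ?_ hQ.to_comp)
      exact Computable.list_cons.comp Computable.snd hT.to_comp

theorem foldl_computable {β σ : Type} [Primcodable β] [Primcodable σ] (f : σ → β → σ) (s : σ)
    (hf : Computable fun p : σ × β => f p.1 p.2) : Computable fun l : List β => l.foldl f s := by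
  have key : Computable fun l : List β =>
      (Nat.rec (motive := fun _ => σ) s (fun y IH =>
        Option.casesOn (l[y]?) IH (fun b => f IH b)) l.length : σ) := by
    refine Computable.nat_rec (h := fun (l : List β) (p : ℕ × σ) =>
      (Option.casesOn (l[p.1]?) p.2 (fun b => f p.2 b) : σ))
      Computable.list_length (Computable.const s) ?_
    refine Computable.option_casesOn ?_ (Computable.snd.comp Computable.snd) ?_
    · exact Computable.list_getElem?.comp Computable.fst (Computable.fst.comp Computable.snd)
    · exact hf.comp (Computable.pair (Computable.snd.comp (Computable.snd.comp Computable.fst))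
        Computable.snd)
  refine key.of_eq fun l => ?_
  have : ∀ n ≤ l.length, (Nat.rec (motive := fun _ => σ) s (fun y IH =>
        Option.casesOn (l[y]?) IH (fun b => f IH b)) n : σ) = (l.take n).foldl f s := by
    intro n
    induction n with
    | zero => intro _; simp
    | succ n ih =>
      intro hn
      have hn' : n < l.length := hn
      simp only [ih hn'.le, List.getElem?_eq_getElem hn', List.take_succ_eq_append_getElem hn',
        List.foldl_append, List.foldl_cons, List.foldl_nil]
  rw [this _ le_rfl, List.take_length]

/-- Invariant of the exploration of the set `F`. -/
structure EInv (nb : ℕ → List ℕ) (F D : Finset ℕ) (s : EState) : Prop where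
  acc : ∀ x, x ∈ s.1 ↔ x ∈ s.2.1 ∧ x ∈ F
  seen : ∀ x ∈ s.2.1, x ∈ F ∨ x ∈ D
  pend : ∀ x ∈ s.2.2, x ∈ F ∨ x ∈ D
  closed : ∀ x ∈ s.1, ∀ z ∈ nb x, z ∈ s.2.1 ∨ z ∈ s.2.2

theorem estep_done (nb : ℕ → List ℕ) (s : EState)
    (h : (s.2.2.filter fun x => x ∉ s.2.1).head? = none) (w : List Bool) :
    w.foldl (estep nb) s = s := by
  induction w with
  | nil => rfl
  | cons b w ih =>
    rw [List.foldl_cons]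
    have : estep nb s b = s := by unfold estep; rw [h]
    rw [this, ih]

theorem explore_aux (nb : ℕ → List ℕ) (F D : Finset ℕ) (hFD : Disjoint F D) (o : ℕ)
    (hnb : ∀ x ∈ F, ∀ z ∈ nb x, z ∈ F ∨ z ∈ D)
    (hconn : ∀ A : Finset ℕ, o ∈ A → A ⊆ F → (∀ x ∈ A, ∀ z ∈ nb x, z ∈ F → z ∈ A) → A = F) :
    ∀ (n : ℕ) (s : EState), EInv nb F D s → o ∈ s.1 →
      (F ∪ D).card - s.2.1.toFinset.card = n →
    ∃ w : List Bool, (∀ w', (((w ++ w').foldl (estep nb) s).1).toFinset = F) ∧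
      w.length + s.2.1.toFinset.card ≤ (F ∪ D).card ∧
      w.count false + (s.2.1.toFinset ∩ D).card ≤ D.card := by
  intro n
  induction n using Nat.strong_induction_on with
  | _ n ih =>
  intro s hs ho hn
  have hsub : s.2.1.toFinset ⊆ F ∪ D := by
    intro x hx
    rw [List.mem_toFinset] at hx
    rw [Finset.mem_union]; exact hs.seen x hx
  have hle := Finset.card_le_card hsub
  rcases hv : (s.2.2.filter fun x => x ∉ s.2.1).head? with _ | v
  · refine ⟨[], ?_, ?_, ?_⟩
    · intro w'
      rw [List.nil_append, estep_done nb s hv]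
      apply hconn
      · simpa using ho
      · intro x hx
        rw [List.mem_toFinset, hs.acc] at hx
        exact hx.2
      · intro x hx z hz hzF
        rw [List.mem_toFinset] at hx ⊢
        rw [hs.acc]
        refine ⟨?_, hzF⟩
        rcases hs.closed x hx z hz with h | h
        · exact h
        · by_contra hc
          rw [List.head?_eq_none_iff, List.filter_eq_nil_iff] at hv
          exact hv z h (by simpa using hc)
    · simpa using hle
    · simpa using Finset.card_le_card (Finset.inter_subset_right (s₁ := s.2.1.toFinset) (s₂ := D))
  · have hvm := List.mem_of_head? hv
    rw [List.mem_filter] at hvm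
    obtain ⟨hvQ, hvT⟩ := hvm
    replace hvT : v ∉ s.2.1 := by simpa using hvT
    have hvT' : v ∉ s.2.1.toFinset := by simpa using hvT
    have hins : insert v s.2.1.toFinset ⊆ F ∪ D := by
      intro x hx
      rcases Finset.mem_insert.1 hx with rfl | hx
      · rw [Finset.mem_union]; exact hs.pend _ hvQ
      · exact hsub hx
    have hlt := Finset.card_le_card hins
    rw [Finset.card_insert_of_notMem hvT'] at hlt
    by_cases hvF : v ∈ F
    · have hst : estep nb s true = (v :: s.1, v :: s.2.1, nb v ++ s.2.2) := by
        unfold estep; rw [hv]; rfl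
      obtain ⟨w, hw1, hw2, hw3⟩ := ih _ (by
          rw [← hn]
          show (F ∪ D).card - (v :: s.2.1).toFinset.card < _
          rw [List.toFinset_cons, Finset.card_insert_of_notMem hvT']
          omega) (v :: s.1, v :: s.2.1, nb v ++ s.2.2)
        ⟨by
          intro x
          have := hs.acc x
          simp only [List.mem_cons]
          constructor
          · rintro (rfl | h)
            · exact ⟨Or.inl rfl, hvF⟩
            · exact ⟨Or.inr (this.1 h).1, (this.1 h).2⟩
          · rintro ⟨rfl | h, h'⟩
            · exact Or.inl rfl
            · exact Or.inr (this.2 ⟨h, h'⟩),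
        by
          intro x hx
          rcases List.mem_cons.1 hx with rfl | hx
          · exact Or.inl hvF
          · exact hs.seen x hx,
        by
          intro x hx
          rcases List.mem_append.1 hx with hx | hx
          · exact hnb v hvF x hx
          · exact hs.pend x hx,
        by
          intro x hx z hz
          simp only [List.mem_cons, List.mem_append]
          rcases List.mem_cons.1 hx with rfl | hx
          · exact Or.inr (Or.inl hz)
          · rcases hs.closed x hx z hz with h | h
            · exact Or.inl (Or.inr h)
            · exact Or.inr (Or.inr h)⟩
        (List.mem_cons_of_mem _ ho) rfl
      refine ⟨true :: w, ?_, ?_, ?_⟩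
      · intro w'
        rw [List.cons_append, List.foldl_cons, hst]
        exact hw1 w'
      · simp only [List.toFinset_cons, Finset.card_insert_of_notMem hvT'] at hw2
        rw [List.length_cons]; omega
      · have hvD : v ∉ D := Finset.disjoint_left.1 hFD hvF
        simp only [List.toFinset_cons, Finset.insert_inter_of_notMem hvD] at hw3
        simpa using hw3
    · have hvD : v ∈ D := (hs.pend v hvQ).resolve_left hvF
      have hst : estep nb s false = (s.1, v :: s.2.1, s.2.2) := by
        unfold estep; rw [hv]; rfl
      obtain ⟨w, hw1, hw2, hw3⟩ := ih _ (by
          rw [← hn]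
          show (F ∪ D).card - (v :: s.2.1).toFinset.card < _
          rw [List.toFinset_cons, Finset.card_insert_of_notMem hvT']
          omega) (s.1, v :: s.2.1, s.2.2)
        ⟨by
          intro x
          have := hs.acc x
          simp only [List.mem_cons]
          constructor
          · intro h
            exact ⟨Or.inr (this.1 h).1, (this.1 h).2⟩
          · rintro ⟨rfl | h, h'⟩
            · exact absurd h' hvF
            · exact this.2 ⟨h, h'⟩,
        by
          intro x hx
          rcases List.mem_cons.1 hx with rfl | hx
          · exact Or.inr hvD
          · exact hs.seen x hx,
        hs.pend,
        by
          intro x hx z hz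
          simp only [List.mem_cons]
          rcases hs.closed x hx z hz with h | h
          · exact Or.inl (Or.inr h)
          · exact Or.inr h⟩
        ho rfl
      refine ⟨false :: w, ?_, ?_, ?_⟩
      · intro w'
        rw [List.cons_append, List.foldl_cons, hst]
        exact hw1 w'
      · simp only [List.toFinset_cons, Finset.card_insert_of_notMem hvT'] at hw2
        rw [List.length_cons]; omega
      · have hvI : v ∉ s.2.1.toFinset ∩ D := fun h => hvT' (Finset.mem_inter.1 h).1
        simp only [List.toFinset_cons, Finset.insert_inter_of_mem hvD,
          Finset.card_insert_of_notMem hvI] at hw3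
        rw [List.count_cons_self]; omega

theorem explore (nb : ℕ → List ℕ) (F D : Finset ℕ) (hFD : Disjoint F D) (o : ℕ) (ho : o ∈ F)
    (hnb : ∀ x ∈ F, ∀ z ∈ nb x, z ∈ F ∨ z ∈ D)
    (hconn : ∀ A : Finset ℕ, o ∈ A → A ⊆ F → (∀ x ∈ A, ∀ z ∈ nb x, z ∈ F → z ∈ A) → A = F) :
    ∃ w : List Bool, (∀ w', (((w ++ w').foldl (estep nb) ([o], [o], nb o)).1).toFinset = F) ∧
      w.length ≤ F.card + D.card ∧ w.count false ≤ D.card := by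
  obtain ⟨w, h1, h2, h3⟩ := explore_aux nb F D hFD o hnb hconn _ ([o], [o], nb o)
    ⟨by intro x; simp only [List.mem_singleton]
        constructor
        · rintro rfl; exact ⟨rfl, ho⟩
        · exact fun h => h.1,
     by intro x hx; rw [List.mem_singleton.1 hx]; exact Or.inl ho,
     hnb o ho,
     by intro x hx z hz; rw [List.mem_singleton.1 hx] at hz; exact Or.inr hz⟩
    (List.mem_singleton.2 rfl) rfl
  rw [Finset.card_union_of_disjoint hFD] at h2
  exact ⟨w, h1, by omega, by omega⟩

/-- The decoding machine. -/
def machine (nb : ℕ → List ℕ) (o m : ℕ) (y : List Bool) : List Bool :=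
  Nat.bits (Encodable.encode (psort ((sdec m y).foldl (estep nb) ([o], [o], nb o)).1))

theorem machine_computable (nb : ℕ → List ℕ) (hnb : Computable nb) (o m : ℕ) :
    Computable (machine nb o m) := by
  have h := (foldl_computable (estep nb) ([o], [o], nb o) (estep_computable nb hnb)).comp
    (sdec_primrec m).to_comp
  have h2 := (bits_primrec.comp (Primrec.encode.comp psort_primrec)).to_comp
  exact h2.comp (Computable.fst.comp h)

theorem complexity_bound (u : List Bool →. List Bool) (hu : Optimal u)
    (nb : ℕ → List ℕ) (hnbc : Computable nb) (o m : ℕ) (hm : 0 < m) :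
    ∃ K : ℕ, ∀ F D : Finset ℕ, Disjoint F D → o ∈ F →
      (∀ x ∈ F, ∀ z ∈ nb x, z ∈ F ∨ z ∈ D) →
      (∀ A : Finset ℕ, o ∈ A → A ⊆ F → (∀ x ∈ A, ∀ z ∈ nb x, z ∈ F → z ∈ A) → A = F) →
      m * KC u (encFinsetNat F) ≤ F.card + (1 + 2 * m * m) * D.card + K := by
  obtain ⟨K, hK⟩ := hu.2 (fun y => Part.some (machine nb o m y))
    (machine_computable nb hnbc o m).partrec
  refine ⟨m + m * K, fun F D hFD ho hnb hconn => ?_⟩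
  obtain ⟨w, h1, h2, h3⟩ := explore nb F D hFD o ho hnb hconn
  obtain ⟨y, w', hy, hl⟩ := sparse m hm w
  have hb := hK (Nat.bits (encFinsetNat F)) y (by
    rw [Part.mem_some_iff, machine, hy, psort_eq, h1 w']; rfl)
  have : m * KC u (encFinsetNat F) ≤ m * (y.length + K) := Nat.mul_le_mul_left _ hb
  have h4 : 2 * m * m * w.count false ≤ 2 * m * m * D.card := Nat.mul_le_mul_left _ h3
  nlinarith

theorem nb_computable {G : Type} [Group G] (e : G ≃ ℕ) (hG : ComputableMul e) (l : List G) :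
    Computable fun n : ℕ => l.map fun s => e (s * e.symm n) := by
  induction l with
  | nil => exact Computable.const _
  | cons s l ih =>
    simp only [List.map_cons]
    refine Computable.list_cons.comp ?_ ih
    have := Computable₂.comp hG (Computable.const (e s)) Computable.id (α := ℕ)
    simpa using this

theorem folner_card {G : Type} [Group G] [Infinite G] (F : ℕ → Finset G) (hF : IsFolner F)
    (hone : ∀ i, (1 : G) ∈ F i) : Tendsto (fun i => ((F i).card : ℝ)) atTop atTop := by
  refine tendsto_natCast_atTop_atTop.comp ?_
  rw [tendsto_atTop]
  intro B
  obtain ⟨X, hX⟩ := Infinite.exists_subset_card_eq G (B + 1)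
  have hev : ∀ᶠ i in atTop, ∀ g ∈ X,
      (((F i).image (fun h => g * h) \ F i).card : ℝ) / ((F i).card : ℝ) < 1 / ((B : ℝ) + 1) := by
    rw [Filter.eventually_all_finset]
    intro g _
    exact (hF.2 g).eventually (gt_mem_nhds (by positivity))
  filter_upwards [hev] with i hi
  by_contra hlt
  push Not at hlt
  have hpos : (0 : ℝ) < (F i).card := by exact_mod_cast Finset.card_pos.2 ⟨1, hone i⟩
  have hsub : X ⊆ F i := by
    intro g hg
    by_contra hgF
    have hmem : g ∈ (F i).image (fun h => g * h) \ F i := by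
      rw [Finset.mem_sdiff]
      exact ⟨Finset.mem_image.2 ⟨1, hone i, mul_one g⟩, hgF⟩
    have h1 : (1 : ℝ) ≤ ((F i).image (fun h => g * h) \ F i).card := by
      exact_mod_cast Finset.card_pos.2 ⟨g, hmem⟩
    have h2 := hi g hg
    rw [div_lt_div_iff₀ hpos (by positivity)] at h2
    have h3 : ((F i).card : ℝ) < B := by exact_mod_cast hlt
    nlinarith
  have := Finset.card_le_card hsub
  omega

/-- **geometric criterion for modesty.** Let `G` be a finitely generated
computable amenable group with a finite symmetric generating set `S`. If `(F_i)` is a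
Følner sequence such that every `F_i` contains `1` and is connected in the Cayley graph
of `(G, S)`, then `(F_i)` is modest. -/
theorem statement7 {G : Type} [Group G]
    (e : G ≃ ℕ) (hGcomp : ComputableMul e)
    (u : List Bool →. List Bool) (hu : Optimal u)
    (S : Finset G) (hSsym : ∀ s ∈ S, s⁻¹ ∈ S)
    (hSgen : Subgroup.closure (S : Set G) = ⊤)
    (F : ℕ → Finset G) (hF : IsFolner F)
    (hone : ∀ i, (1 : G) ∈ F i)
    (hconn : ∀ i, ∀ g ∈ F i, ∀ h ∈ F i, ∃ (n : ℕ) (c : ℕ → G),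
      c 0 = g ∧ c n = h ∧ (∀ k ≤ n, c k ∈ F i) ∧ ∀ k < n, ∃ s ∈ S, c (k + 1) = s * c k) :
    Modest u e F := by
  have hinf : Infinite G := Infinite.of_injective e.symm e.symm.injective
  have hcard := folner_card F hF hone
  have hpos : ∀ i, (0 : ℝ) < (F i).card := fun i => by
    exact_mod_cast Finset.card_pos.2 ⟨1, hone i⟩
  -- the outer boundary
  let D : ℕ → Finset G := fun i => S.biUnion fun s => (F i).image (fun h => s * h) \ F i
  have hD : Tendsto (fun i => ((D i).card : ℝ) / ((F i).card : ℝ)) atTop (nhds 0) := by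
    have hsum : Tendsto (fun i => ∑ s ∈ S,
        (((F i).image (fun h => s * h) \ F i).card : ℝ) / ((F i).card : ℝ)) atTop (nhds 0) := by
      have := tendsto_finset_sum S (fun s _ => hF.2 s)
      simpa using this
    refine squeeze_zero (fun i => by positivity) (fun i => ?_) hsum
    rw [← Finset.sum_div]
    refine div_le_div_of_nonneg_right ?_ (hpos i).le
    exact_mod_cast Finset.card_biUnion_le
  -- the neighbour function
  let nb : ℕ → List ℕ := fun n => S.toList.map fun s => e (s * e.symm n)
  have hnbc : Computable nb := nb_computable e hGcomp S.toList
  have hbound : ∀ m : ℕ, 0 < m → ∃ K : ℕ, ∀ i,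
      (KC u (encFinset e (F i)) : ℝ) / ((F i).card : ℝ) ≤
        (1 + (1 + 2 * m * m) * (((D i).card : ℝ) / ((F i).card : ℝ)) + K / ((F i).card : ℝ)) / m := by
    intro m hm
    obtain ⟨K, hK⟩ := complexity_bound u hu nb hnbc (e 1) m hm
    refine ⟨K, fun i => ?_⟩
    have h := hK ((F i).image e) ((D i).image e) ?_ ?_ ?_ ?_
    · rw [Finset.card_image_of_injective _ e.injective,
        Finset.card_image_of_injective _ e.injective] at h
      have h' : (m : ℝ) * KC u (encFinset e (F i)) ≤
          (F i).card + (1 + 2 * m * m) * (D i).card + K := by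
        have h0 : m * KC u (encFinset e (F i)) ≤
          (F i).card + (1 + 2 * m * m) * (D i).card + K := h
        exact_mod_cast h0
      have hm' : (0 : ℝ) < m := by exact_mod_cast hm
      have hp := hpos i
      rw [le_div_iff₀ hm', div_mul_eq_mul_div, div_le_iff₀ hp]
      have e1 : (1 + (1 + 2 * (m : ℝ) * m) * (((D i).card : ℝ) / ((F i).card : ℝ)) +
          K / ((F i).card : ℝ)) * (F i).card =
          (F i).card + (1 + 2 * m * m) * (D i).card + K := by
        field_simp
      rw [e1]; linarith
    · rw [Finset.disjoint_image e.injective, Finset.disjoint_left]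
      intro x hx hxD
      obtain ⟨s, _, hs⟩ := Finset.mem_biUnion.1 hxD
      exact (Finset.mem_sdiff.1 hs).2 hx
    · exact Finset.mem_image_of_mem _ (hone i)
    · intro x hx z hz
      obtain ⟨g, hg, rfl⟩ := Finset.mem_image.1 hx
      obtain ⟨s, hs, rfl⟩ := List.mem_map.1 hz
      rw [Finset.mem_toList] at hs
      rw [e.symm_apply_apply]
      by_cases hin : s * g ∈ F i
      · exact Or.inl (Finset.mem_image_of_mem _ hin)
      · refine Or.inr (Finset.mem_image_of_mem _ (Finset.mem_biUnion.2 ⟨s, hs, ?_⟩))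
        exact Finset.mem_sdiff.2 ⟨Finset.mem_image.2 ⟨g, hg, rfl⟩, hin⟩
    · intro A hoA hAF hcl
      refine Finset.Subset.antisymm hAF ?_
      intro x hx
      obtain ⟨g, hg, rfl⟩ := Finset.mem_image.1 hx
      obtain ⟨n, c, hc0, hcn, hcF, hcs⟩ := hconn i 1 (hone i) g hg
      have hall : ∀ k ≤ n, e (c k) ∈ A := by
        intro k
        induction k with
        | zero => intro _; rw [hc0]; exact hoA
        | succ k ih =>
          intro hk
          obtain ⟨s, hs, hsk⟩ := hcs k (by omega)
          refine hcl (e (c k)) (ih (by omega)) _ ?_ (Finset.mem_image_of_mem _ (hcF _ hk))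
          refine List.mem_map.2 ⟨s, Finset.mem_toList.2 hs, ?_⟩
          rw [e.symm_apply_apply, hsk]
      rw [← hcn]
      exact hall n le_rfl
  unfold Modest
  rw [Metric.tendsto_atTop']
  intro ε hε
  obtain ⟨m, hm⟩ := exists_nat_gt (2 / ε)
  have hm0 : (0 : ℝ) < m := lt_trans (by positivity) hm
  obtain ⟨K, hK⟩ := hbound m (by exact_mod_cast hm0)
  have hlim : Tendsto (fun i => (1 + (1 + 2 * (m : ℝ) * m) * (((D i).card : ℝ) / ((F i).card : ℝ)) +
      K / ((F i).card : ℝ)) / m) atTop (nhds ((1 + (1 + 2 * (m : ℝ) * m) * 0 + 0) / m)) := by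
    refine Tendsto.div_const (Tendsto.add (Tendsto.add tendsto_const_nhds
      (hD.const_mul _)) ?_) _
    exact hcard.const_div_atTop _
  have hlt : (1 + (1 + 2 * (m : ℝ) * m) * 0 + 0) / m < ε := by
    rw [div_lt_iff₀ hm0]
    rw [div_lt_iff₀ hε] at hm
    linarith
  obtain ⟨N, hN⟩ := eventually_atTop.1 (hlim.eventually (gt_mem_nhds hlt))
  refine ⟨N, fun i hi => ?_⟩
  rw [Real.dist_eq, sub_zero, abs_of_nonneg (by positivity)]
  exact lt_of_le_of_lt (hK i) (hN i hi.le)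

end Brudno
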